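/- arXiv:1803.03488 — 4 statements merged into one kernel-verified Lean document; each statement's English description precedes it below -/
import Mathlib

section
/- Let ε > 0, a ≠ 0 and 0 < c < 1. Let ũ : [0,1] → ℝ be continuously differentiable and set v̄(x) = e^{−(a/ε)ũ(x)} − 1. If sup_{x ∈ [0,1]} |v̄(x)| < c, then ‖ũ‖_{H¹} ≤ (ε/(|a|(1 − c)))·‖v̄‖_{H¹}. -/
/-!
With `s = -(a/ε) ũ(x)` the smallness hypothesis gives `exp s > 1 - c`, and then both parts of the
norm compare pointwise. For the function values, `(1 - c) |s| ≤ |exp s - 1|`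
(`mul_abs_le_abs_exp_sub_one`), which is the bound `exp t ≥ 1 + t` at `t = s` or `t = -s`.
For the derivatives, `v̄' = -(a/ε) ũ' exp s`, whose absolute value is at least
`(|a|/ε) (1 - c) |ũ'|`. Integrating the squares (`sqrt_integral_sq_le`) gives the claim for each
summand separately.
-/

noncomputable section

/-- The `H¹(0,1)` norm of a function: `‖u‖ = (∫₀¹ u²)^{1/2} + (∫₀¹ (u')²)^{1/2}`. -/
def H1norm (u : ℝ → ℝ) : ℝ :=
  Real.sqrt (∫ x in (0:ℝ)..1, u x ^ 2) + Real.sqrt (∫ x in (0:ℝ)..1, deriv u x ^ 2)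

theorem mul_abs_le_abs_exp_sub_one {s d : ℝ} (hd1 : d ≤ 1) (hs : d ≤ Real.exp s) :
    d * |s| ≤ |Real.exp s - 1| := by
  rcases le_total 0 s with h | h
  · rw [abs_of_nonneg h]
    have h1 := Real.add_one_le_exp s
    have h2 := le_abs_self (Real.exp s - 1)
    nlinarith
  · rw [abs_of_nonpos h]
    -- Multiplying `1 - s ≤ exp (-s)` by `exp s` gives `exp s * (-s) ≤ 1 - exp s`.
    have h1 : (-s + 1) * Real.exp s ≤ Real.exp (-s) * Real.exp s :=
      mul_le_mul_of_nonneg_right (Real.add_one_le_exp (-s)) (Real.exp_pos s).le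
    rw [← Real.exp_add, neg_add_cancel, Real.exp_zero] at h1
    have h2 := neg_le_abs (Real.exp s - 1)
    nlinarith

theorem sqrt_integral_sq_le {f g : ℝ → ℝ} (hf : Continuous f) (hg : Continuous g) {K : ℝ}
    (hK : 0 ≤ K) (h : ∀ x ∈ Set.Icc (0:ℝ) 1, |f x| ≤ K * |g x|) :
    Real.sqrt (∫ x in (0:ℝ)..1, f x ^ 2) ≤ K * Real.sqrt (∫ x in (0:ℝ)..1, g x ^ 2) := by
  have key : ∫ x in (0:ℝ)..1, f x ^ 2 ≤ K ^ 2 * ∫ x in (0:ℝ)..1, g x ^ 2 := by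
    rw [← intervalIntegral.integral_const_mul]
    refine intervalIntegral.integral_mono_on zero_le_one
      ((hf.pow 2).intervalIntegrable _ _)
      ((continuous_const.mul (hg.pow 2)).intervalIntegrable _ _) fun x hx => ?_
    rw [← sq_abs (f x), ← sq_abs (g x), ← mul_pow]
    exact pow_le_pow_left₀ (abs_nonneg _) (h x hx) 2
  calc _ ≤ Real.sqrt (K ^ 2 * ∫ x in (0:ℝ)..1, g x ^ 2) := Real.sqrt_le_sqrt key
    _ = _ := by rw [Real.sqrt_mul (sq_nonneg K), Real.sqrt_sq hK]

/-- If `ũ` is `C¹` on `[0,1]`, `v̄(x) = e^{−(a/ε)ũ(x)} − 1`, and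
`sup_{x∈[0,1]} |v̄(x)| < c` for some `0 < c < 1`, then
`‖ũ‖_{H¹} ≤ (ε/(|a|(1−c)))·‖v̄‖_{H¹}`. -/
theorem inverse_transformation_H1_bound (ε a c : ℝ) (hε : 0 < ε) (ha : a ≠ 0)
    (hc0 : 0 < c) (hc1 : c < 1) (utilde : ℝ → ℝ) (hu : ContDiff ℝ 1 utilde)
    (hsmall : ∀ x ∈ Set.Icc (0:ℝ) 1, |Real.exp (-(a / ε) * utilde x) - 1| < c) :
    H1norm utilde ≤
      ε / (|a| * (1 - c)) * H1norm (fun x => Real.exp (-(a / ε) * utilde x) - 1) := by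
  have ha' : 0 < |a| := abs_pos.mpr ha
  have hd : 0 < 1 - c := sub_pos.mpr hc1
  have hv : ContDiff ℝ 1 (fun x => Real.exp (-(a / ε) * utilde x) - 1) := by fun_prop
  have hexp : ∀ x ∈ Set.Icc (0:ℝ) 1, 1 - c ≤ Real.exp (-(a / ε) * utilde x) := fun x hx => by
    linarith [(abs_lt.mp (hsmall x hx)).1]
  have hk : |-(a / ε)| = |a| / ε := by rw [abs_neg, abs_div, abs_of_pos hε]
  have hscale : ∀ y z : ℝ, (1 - c) * (|a| / ε * y) ≤ z → y ≤ ε / (|a| * (1 - c)) * z := by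
    intro y z h
    calc y = ε / (|a| * (1 - c)) * ((1 - c) * (|a| / ε * y)) := by field_simp
      _ ≤ _ := by gcongr
  unfold H1norm
  rw [mul_add]
  refine add_le_add
    (sqrt_integral_sq_le hu.continuous hv.continuous (by positivity) fun x hx => ?_)
    (sqrt_integral_sq_le (hu.continuous_deriv le_rfl) (hv.continuous_deriv le_rfl)
      (by positivity) fun x hx => ?_)
  · apply hscale
    have := mul_abs_le_abs_exp_sub_one (by linarith) (hexp x hx)
    rwa [abs_mul, hk] at this
  · apply hscale
    have hderiv : deriv (fun x => Real.exp (-(a / ε) * utilde x) - 1) x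
        = Real.exp (-(a / ε) * utilde x) * (-(a / ε) * deriv utilde x) :=
      ((((hu.differentiable one_ne_zero) x).hasDerivAt.const_mul (-(a / ε))).exp.sub_const
        1).deriv
    rw [hderiv, abs_mul, abs_mul, hk, Real.abs_exp]
    exact mul_le_mul_of_nonneg_right (hexp x hx) (by positivity)

end
end

section
/- Let γ ∈ [1,2) and F, M > 0. If f̄ : [0,∞) → ℝ and ḡ : [0,∞) → ℝ both belong to the Gevrey class G_{F,M,γ}([0,∞)), then the function h(t) = e^{f̄(t)}·ḡ(t) belongs to the Gevrey class G_{F₂,M₂,γ}([0,∞)) with F₂ = F·(1 + F·e^F) and M₂ = (1 + F·e^F)·M·e^F; that is, sup_{t ≥ 0} |h^{(n)}(t)| ≤ F₂·M₂^n·(n!)^γ for all integers n ≥ 0. -/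
/-!
The bounds `F * M ^ n * (n !) ^ γ` are stable under Leibniz' rule because, for `γ ≥ 1`,
`C(n, k) * (k !) ^ γ * ((n - k)!) ^ γ ≤ (n !) ^ γ` (a binomial coefficient is at most its `γ`-th
power). Writing `u = exp ∘ f`, the identity `u' = u * f'` and Leibniz' rule give by strong induction
`|u⁽ⁿ⁾| ≤ e ^ F * d n * M ^ n * (n !) ^ γ`, where `d 0 = 1` and `d (n + 1) = F * ∑_{k ≤ n} d k`. This
recursion has partial sums `∑_{k ≤ n} d k = (1 + F) ^ n`, so one more use of Leibniz' rule, for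
`u * g`, bounds the `n`-th derivative by `F * e ^ F * ((1 + F) * M) ^ n * (n !) ^ γ`. Finally
`e ^ F ≤ 1 + F * e ^ F` and `1 + F ≤ (1 + F * e ^ F) * e ^ F`.
-/

noncomputable section

/-- `f` belongs to the Gevrey class `G_{F,M,γ}([0,∞))`. -/
def InGevrey (F M γ : ℝ) (f : ℝ → ℝ) : Prop :=
  ContDiff ℝ (⊤ : ℕ∞) f ∧
    ∀ n : ℕ, ∀ t : ℝ, 0 ≤ t →
      |iteratedDeriv n f t| ≤ F * M ^ n * (Nat.factorial n : ℝ) ^ γ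

/-- The solution of `d 0 = 1`, `d (n + 1) = F * ∑_{k ≤ n} d k`, in closed form. -/
def expCoeff (F : ℝ) : ℕ → ℝ
  | 0 => 1
  | n + 1 => F * (1 + F) ^ n

lemma sum_expCoeff (F : ℝ) (n : ℕ) :
    ∑ k ∈ Finset.range (n + 1), expCoeff F k = (1 + F) ^ n := by
  induction n with
  | zero => simp [expCoeff]
  | succ n ih => rw [Finset.sum_range_succ, ih, expCoeff]; ring

lemma expCoeff_nonneg {F : ℝ} (hF : 0 < F) (n : ℕ) : 0 ≤ expCoeff F n := by
  cases n <;> simp only [expCoeff] <;> positivity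

lemma choose_mul_factorial_rpow_le {γ : ℝ} (hγ : 1 ≤ γ) {n k : ℕ} (hk : k ≤ n) :
    (n.choose k : ℝ) * ((k.factorial : ℝ) ^ γ * ((n - k).factorial : ℝ) ^ γ)
      ≤ (n.factorial : ℝ) ^ γ := by
  have h1 : (1 : ℝ) ≤ n.choose k := by exact_mod_cast Nat.choose_pos hk
  have h2 : (n.choose k : ℝ) ≤ (n.choose k : ℝ) ^ γ := Real.self_le_rpow_of_one_le h1 hγ
  have h3 : (n.factorial : ℝ) = n.choose k * (k.factorial * (n - k).factorial) := by
    rw [← mul_assoc]; exact_mod_cast (Nat.choose_mul_factorial_mul_factorial hk).symm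
  rw [h3, Real.mul_rpow (by positivity) (by positivity),
    Real.mul_rpow (by positivity) (by positivity)]
  gcongr

/-- The weight occurring in Leibniz' rule when the second factor is itself a derivative, so that
its `n - k`-th derivative is bounded through the factorial of `n - k + 1`. -/
lemma choose_mul_factorial_succ_rpow_le {γ : ℝ} (hγ : 1 ≤ γ) {n k : ℕ} (hk : k ≤ n) :
    (n.choose k : ℝ) * ((k.factorial : ℝ) ^ γ * ((n - k + 1).factorial : ℝ) ^ γ)
      ≤ ((n + 1).factorial : ℝ) ^ γ := by
  have h := choose_mul_factorial_rpow_le hγ (Nat.le_succ_of_le hk)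
  rw [Nat.succ_eq_add_one, Nat.sub_add_comm hk] at h
  refine le_trans ?_ h
  gcongr
  exact Nat.le_succ n

/-- Leibniz' rule for bounds of Gevrey type; `s = 0` treats a product `u * v`, and `s = 1` a product
`u * v'` estimated at the order of differentiation of `v` raised by one. -/
lemma leibniz_bound {γ M B F t : ℝ} {n s : ℕ} {u v : ℝ → ℝ} {c : ℕ → ℝ}
    (hM : 0 < M) (hB : 0 ≤ B) (hF : 0 ≤ F) (hc : ∀ k, 0 ≤ c k)
    (hu : ContDiff ℝ (⊤ : ℕ∞) u) (hv : ContDiff ℝ (⊤ : ℕ∞) v)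
    (hub : ∀ k ≤ n, |iteratedDeriv k u t| ≤ B * c k * M ^ k * (k.factorial : ℝ) ^ γ)
    (hvb : ∀ k, |iteratedDeriv k v t| ≤ F * M ^ (k + s) * ((k + s).factorial : ℝ) ^ γ)
    (hw : ∀ k ≤ n, (n.choose k : ℝ) *
      ((k.factorial : ℝ) ^ γ * ((n - k + s).factorial : ℝ) ^ γ) ≤ ((n + s).factorial : ℝ) ^ γ) :
    |iteratedDeriv n (u * v) t| ≤ B * (F * ∑ k ∈ Finset.range (n + 1), c k) * M ^ (n + s) *
      ((n + s).factorial : ℝ) ^ γ := by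
  rw [iteratedDeriv_mul (hu.contDiffAt.of_le (by exact_mod_cast le_top))
    (hv.contDiffAt.of_le (by exact_mod_cast le_top))]
  refine (Finset.abs_sum_le_sum_abs _ _).trans ?_
  rw [Finset.mul_sum, Finset.mul_sum, Finset.sum_mul, Finset.sum_mul]
  refine Finset.sum_le_sum fun k hk => ?_
  have hk : k ≤ n := Nat.lt_succ_iff.mp (Finset.mem_range.mp hk)
  have hck := hc k
  rw [abs_mul, abs_mul, Nat.abs_cast]
  calc _ ≤ (n.choose k : ℝ) * (B * c k * M ^ k * (k.factorial : ℝ) ^ γ) *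
        (F * M ^ (n - k + s) * ((n - k + s).factorial : ℝ) ^ γ) := by
        gcongr
        · exact hub k hk
        · exact hvb _
    _ = B * (F * c k) * M ^ (n + s) * ((n.choose k : ℝ) *
      ((k.factorial : ℝ) ^ γ * ((n - k + s).factorial : ℝ) ^ γ)) := by
        rw [show n + s = k + (n - k + s) by omega, pow_add M k]; ring
    _ ≤ _ := by gcongr; exact hw k hk

lemma abs_iteratedDeriv_exp_comp_le {γ F M t : ℝ} {f : ℝ → ℝ} (hγ : 1 ≤ γ) (hF : 0 < F)
    (hM : 0 < M) (hf : InGevrey F M γ f) (ht : 0 ≤ t) (n : ℕ) :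
    |iteratedDeriv n (fun x => Real.exp (f x)) t| ≤
      Real.exp F * expCoeff F n * M ^ n * (n.factorial : ℝ) ^ γ := by
  induction n using Nat.strong_induction_on with
  | _ n ih =>
    cases n with
    | zero =>
      have h := hf.2 0 t ht
      simp at h
      simpa [expCoeff] using (le_abs_self _).trans h
    | succ n =>
      have hd : deriv (fun x => Real.exp (f x)) = (fun x => Real.exp (f x)) * deriv f := by
        ext x
        exact deriv_exp (hf.1.differentiable (by simp) x)
      have hf' : ContDiff ℝ (⊤ : ℕ∞) (deriv f) := (contDiff_infty_iff_deriv.mp hf.1).2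
      rw [iteratedDeriv_succ', hd, expCoeff, ← sum_expCoeff]
      refine leibniz_bound hM (Real.exp_pos F).le hF.le (expCoeff_nonneg hF)
        (Real.contDiff_exp.comp hf.1) hf' (fun k hk => ih k (by omega)) (fun k => ?_)
        fun k hk => choose_mul_factorial_succ_rpow_le hγ hk
      rw [← iteratedDeriv_succ']
      exact hf.2 (k + 1) t ht

/-- If `f̄, ḡ ∈ G_{F,M,γ}` with `γ ∈ [1,2)`, then `h(t) = e^{f̄(t)}·ḡ(t)` belongs to
`G_{F₂,M₂,γ}` with `F₂ = F(1 + F·e^F)` and `M₂ = (1 + F·e^F)·M·e^F`. -/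
theorem gevrey_exp_mul (γ F M : ℝ) (hγ1 : 1 ≤ γ) (hγ2 : γ < 2)
    (hF : 0 < F) (hM : 0 < M) (fbar gbar : ℝ → ℝ)
    (hf : InGevrey F M γ fbar) (hg : InGevrey F M γ gbar) :
    InGevrey (F * (1 + F * Real.exp F)) ((1 + F * Real.exp F) * M * Real.exp F) γ
      (fun t => Real.exp (fbar t) * gbar t) := by

  have hu : ContDiff ℝ (⊤ : ℕ∞) (fun x => Real.exp (fbar x)) := Real.contDiff_exp.comp hf.1
  refine ⟨hu.mul hg.1, fun n t ht => ?_⟩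
  have h := leibniz_bound (s := 0) (n := n) hM (Real.exp_pos F).le hF.le (expCoeff_nonneg hF) hu
    hg.1 (fun k _ => abs_iteratedDeriv_exp_comp_le hγ1 hF hM hf ht k) (fun k => hg.2 k t ht)
    fun k hk => choose_mul_factorial_rpow_le hγ1 hk
  rw [sum_expCoeff, add_zero] at h
  have hE : 1 ≤ Real.exp F := Real.one_le_exp hF.le
  -- this is `1 - F ≤ exp (-F)` multiplied by `exp F`
  have h1 : Real.exp F ≤ 1 + F * Real.exp F := by
    have h2 := mul_le_mul_of_nonneg_right (Real.add_one_le_exp (-F)) (Real.exp_pos F).le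
    rw [← Real.exp_add, neg_add_cancel, Real.exp_zero] at h2
    linarith
  have h2 : 1 + F ≤ (1 + F * Real.exp F) * Real.exp F := by
    nlinarith [mul_le_mul_of_nonneg_left hE hF.le, mul_pos hF (Real.exp_pos F)]
  refine h.trans ?_
  calc _ = F * Real.exp F * ((1 + F) * M) ^ n * (n.factorial : ℝ) ^ γ := by
        rw [mul_pow]; ring
    _ ≤ F * (1 + F * Real.exp F) * ((1 + F * Real.exp F) * Real.exp F * M) ^ n *
        (n.factorial : ℝ) ^ γ := by gcongr
    _ = _ := by rw [mul_right_comm _ (Real.exp F) M]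

end
end

section
/- Let ε > 0, a ≠ 0, b ∈ ℝ, x₀ ∈ [0,1], γ ∈ [1,2) and F, M > 0. Suppose y₁ʳ, y₂ʳ : [0,∞) → ℝ belong to the Gevrey class G_{F,M,γ}([0,∞)). Define y₁ᵥʳ(t) = e^{−(ab/2ε)x₀}(e^{−(a/ε)y₁ʳ(t)} − 1) and y₂ᵥʳ(t) = e^{−(ab/2ε)x₀}(−(a/ε)e^{−(a/ε)y₁ʳ(t)}·y₂ʳ(t) − (ab/2ε)(e^{−(a/ε)y₁ʳ(t)} − 1)). Then for all integers n ≥ 0: sup_{t ≥ 0}|(y₁ᵥʳ)^{(n)}(t)| ≤ F̄₁·M̄₁^n·(n!)^γ and sup_{t ≥ 0}|(y₂ᵥʳ)^{(n)}(t)| ≤ F̄₂·M̄₂^n·(n!)^γ, where F̄₁ = F·(|a|/ε)·e^{F|a|/ε}·e^{−(ab/2ε)x₀}, M̄₁ = M·e^{F|a|/ε}, F̄₂ = F·(|a|/ε)·e^{F|a|/ε}·e^{−(ab/2ε)x₀}·(e^{−F|a|/ε} + |ab|/(2ε) + F|a|/ε), and M̄₂ = (1 + F·(|a|/ε)·e^{F|a|/ε})·M̄₁.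 -/
/-!
Put `c = -a/ε`, `K = F |c|`, `g = exp (c y₁)`. Leibniz' rule applied to `g' = g * (c y₁')` gives, by
strong induction, `|g⁽ⁿ⁾| ≤ e^K Mⁿ (n!)^γ qₙ` on `[0, ∞)`, where `q₀ = 1` and
`qₙ₊₁ = K (q₀ + ⋯ + qₙ)`, that is `qₙ₊₁ = K (1 + K)ⁿ` (`abs_iteratedDeriv_exp_le`). The factorials
cause no loss: `γ ≥ 1` makes `C(n, k) (k!)^γ ((n-k)!)^γ ≤ (n!)^γ`.

Since `1 + K ≤ e^K`, this bounds the derivatives of `g` of order at least one as required for `y₁ᵥʳ`,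
and order zero is `|eˣ - 1| ≤ K e^K` for `|x| ≤ K`. One more Leibniz expansion, with
`q₀ + ⋯ + qₙ = (1 + K)ⁿ ≤ e^{Kn}`, bounds `g y₂` (`abs_iteratedDeriv_exp_mul_le`). The estimate for
`y₂ᵥʳ` then follows from `e^K ≤ 1 + K e^K`.
-/

noncomputable section

/-- `y₁ᵥʳ(t) = e^{−(ab/2ε)x₀}(e^{−(a/ε)y₁ʳ(t)} − 1)`. -/
def yOneV (ε a b x₀ : ℝ) (y₁ : ℝ → ℝ) (t : ℝ) : ℝ :=
  Real.exp (-(a * b / (2 * ε)) * x₀) * (Real.exp (-(a / ε) * y₁ t) - 1)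

/-- `y₂ᵥʳ(t) = e^{−(ab/2ε)x₀}(−(a/ε)e^{−(a/ε)y₁ʳ(t)}y₂ʳ(t) − (ab/2ε)(e^{−(a/ε)y₁ʳ(t)} − 1))`. -/
def yTwoV (ε a b x₀ : ℝ) (y₁ y₂ : ℝ → ℝ) (t : ℝ) : ℝ :=
  Real.exp (-(a * b / (2 * ε)) * x₀) *
    (-(a / ε) * Real.exp (-(a / ε) * y₁ t) * y₂ t
      - a * b / (2 * ε) * (Real.exp (-(a / ε) * y₁ t) - 1))

/-- The sequence `q` with `q 0 = 1` and `q (n + 1) = K * ∑ k ≤ n, q k`, in closed form. It records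
how the derivatives of `exp (c * y)` grow beyond `M ^ n * (n !) ^ γ`. -/
def expWeight (K : ℝ) : ℕ → ℝ
  | 0 => 1
  | n + 1 => K * (1 + K) ^ n

lemma sum_expWeight (K : ℝ) (n : ℕ) :
    ∑ k ∈ Finset.range (n + 1), expWeight K k = (1 + K) ^ n := by
  induction n with
  | zero => simp [expWeight]
  | succ n ih => rw [Finset.sum_range_succ, ih, expWeight]; ring

/-- The binomial coefficient in Leibniz' rule is absorbed by the Gevrey factorials, because
`C(n, k) ≤ C(n, k) ^ γ` for `γ ≥ 1`. -/
lemma choose_mul_rpow_factorial_le {γ : ℝ} (hγ : 1 ≤ γ) {n k : ℕ} (h : k ≤ n) :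
    (n.choose k : ℝ) * ((k.factorial : ℝ) ^ γ * ((n - k).factorial : ℝ) ^ γ)
      ≤ (n.factorial : ℝ) ^ γ := by
  have h1 : (1 : ℝ) ≤ n.choose k := by exact_mod_cast Nat.choose_pos h
  have h2 : (n.choose k : ℝ) ≤ (n.choose k : ℝ) ^ γ := by
    simpa using Real.rpow_le_rpow_of_exponent_le h1 hγ
  have h3 : ((n.choose k : ℝ) * k.factorial * (n - k).factorial) = n.factorial := by
    exact_mod_cast Nat.choose_mul_factorial_mul_factorial h
  rw [← h3, Real.mul_rpow (by positivity) (by positivity),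
    Real.mul_rpow (by positivity) (by positivity), mul_assoc]
  gcongr

/-- As in `choose_mul_rpow_factorial_le`, with one extra derivative on the second factor, using
`C(n, k) ≤ C(n + 1, k)`. -/
lemma choose_mul_rpow_factorial_succ_le {γ : ℝ} (hγ : 1 ≤ γ) {n k : ℕ} (h : k ≤ n) :
    (n.choose k : ℝ) * ((k.factorial : ℝ) ^ γ * ((n - k + 1).factorial : ℝ) ^ γ)
      ≤ ((n + 1).factorial : ℝ) ^ γ := by
  refine le_trans ?_ (choose_mul_rpow_factorial_le hγ (h.trans n.le_succ))
  rw [Nat.sub_add_comm h]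
  have : n.choose k ≤ (n + 1).choose k := Nat.choose_le_choose k n.le_succ
  gcongr

/-- Leibniz' rule as a bound: if its `k`-th term is at most `B * q k`, the derivative of the product
is at most `B` times the sum of the weights `q k`. -/
lemma abs_iteratedDeriv_mul_le {f g : ℝ → ℝ} (hf : ContDiff ℝ (⊤ : ℕ∞) f)
    (hg : ContDiff ℝ (⊤ : ℕ∞) g) {n : ℕ} {t B : ℝ} {q : ℕ → ℝ}
    (h : ∀ k ≤ n, (n.choose k : ℝ) * (|iteratedDeriv k f t| * |iteratedDeriv (n - k) g t|)
      ≤ B * q k) :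
    |iteratedDeriv n (fun s => f s * g s) t| ≤ B * ∑ k ∈ Finset.range (n + 1), q k := by
  have hn : ((n : ℕ∞) : WithTop ℕ∞) ≤ ((⊤ : ℕ∞) : WithTop ℕ∞) := by exact_mod_cast le_top
  rw [iteratedDeriv_fun_mul ((hf.of_le hn).contDiffAt) ((hg.of_le hn).contDiffAt),
    Finset.mul_sum]
  refine (Finset.abs_sum_le_sum_abs _ _).trans (Finset.sum_le_sum fun k hk => ?_)
  rw [abs_mul, abs_mul, Nat.abs_cast, mul_assoc]
  exact h k (Nat.lt_succ_iff.mp (Finset.mem_range.mp hk))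

lemma expWeight_nonneg {K : ℝ} (hK : 0 ≤ K) (n : ℕ) : 0 ≤ expWeight K n := by
  cases n <;> simp only [expWeight] <;> positivity

/-- Derivatives of `exp (c * y)` for a Gevrey function `y`, by strong induction on the identity
`(exp (c * y))' = exp (c * y) * (c * y')`. -/
lemma abs_iteratedDeriv_exp_le {F M γ c : ℝ} (hγ : 1 ≤ γ) (hF : 0 < F) (hM : 0 < M)
    {y : ℝ → ℝ} (hy : InGevrey F M γ y) {t : ℝ} (ht : 0 ≤ t) (n : ℕ) :
    |iteratedDeriv n (fun s => Real.exp (c * y s)) t| ≤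
      Real.exp (F * |c|) * M ^ n * (n.factorial : ℝ) ^ γ * expWeight (F * |c|) n := by
  obtain ⟨hys, hyb⟩ := hy
  have hgs : ContDiff ℝ (⊤ : ℕ∞) (fun s => Real.exp (c * y s)) := by fun_prop
  have hds : ContDiff ℝ (⊤ : ℕ∞) (deriv y) := (contDiff_infty_iff_deriv.mp hys).2
  have hd : deriv (fun s => Real.exp (c * y s)) =
      fun s => Real.exp (c * y s) * (c * deriv y s) := by
    funext s
    have hy1 : HasDerivAt y (deriv y s) s :=
      (contDiff_infty_iff_deriv.mp hys).1.differentiableAt.hasDerivAt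
    exact ((hy1.const_mul c).exp).deriv
  induction n using Nat.strong_induction_on with
  | _ n ih =>
    rcases n with _ | n
    · have h0 := hyb 0 t ht
      simp only [iteratedDeriv_zero, pow_zero, Nat.factorial_zero, Nat.cast_one,
        Real.one_rpow, mul_one] at h0
      simp only [iteratedDeriv_zero, pow_zero, Nat.factorial_zero, Nat.cast_one,
        Real.one_rpow, mul_one, expWeight, Real.abs_exp]
      refine Real.exp_le_exp.mpr ?_
      calc c * y t ≤ |c| * |y t| := (le_abs_self _).trans_eq (abs_mul _ _)
        _ ≤ |c| * F := by gcongr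
        _ = F * |c| := mul_comm _ _
    · rw [iteratedDeriv_succ', hd]
      refine (abs_iteratedDeriv_mul_le (q := expWeight (F * |c|))
        (B := Real.exp (F * |c|) * (F * |c|) * M ^ (n + 1) * ((n + 1).factorial : ℝ) ^ γ)
        hgs (contDiff_const.mul hds) fun k hk => ?_).trans_eq ?_
      · have h1 := ih k (by omega)
        have h2 := hyb (n - k + 1) t ht
        rw [iteratedDeriv_succ'] at h2
        have hM' : M ^ (n + 1) = M ^ k * M ^ (n - k + 1) := by
          rw [← pow_add]; congr 1; omega
        rw [iteratedDeriv_const_mul_field, abs_mul]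
        have hq := expWeight_nonneg (K := F * |c|) (by positivity) k
        calc _ ≤ (n.choose k : ℝ) *
              ((Real.exp (F * |c|) * M ^ k * (k.factorial : ℝ) ^ γ * expWeight (F * |c|) k) *
                (|c| * (F * M ^ (n - k + 1) * ((n - k + 1).factorial : ℝ) ^ γ))) := by gcongr
          _ = Real.exp (F * |c|) * (F * |c|) * M ^ (n + 1) *
              ((n.choose k : ℝ) * ((k.factorial : ℝ) ^ γ * ((n - k + 1).factorial : ℝ) ^ γ)) *
                expWeight (F * |c|) k := by rw [hM']; ring
          _ ≤ _ := by
            gcongr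
            exact choose_mul_rpow_factorial_succ_le hγ hk
      · rw [sum_expWeight, expWeight]; ring

lemma abs_exp_sub_one_le_mul_exp {x K : ℝ} (h : |x| ≤ K) :
    |Real.exp x - 1| ≤ K * Real.exp K := by
  obtain ⟨h1, h2⟩ := abs_le.mp h
  have hK : 0 ≤ K := (abs_nonneg x).trans h
  have e1 := Real.add_one_le_exp x
  have e2 := Real.add_one_le_exp (-K)
  have e3 : Real.exp x ≤ Real.exp K := Real.exp_le_exp.mpr h2
  have e4 : Real.exp (-K) * Real.exp K = 1 := by rw [← Real.exp_add]; simp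
  have e5 : 1 ≤ Real.exp K := Real.one_le_exp hK
  rw [abs_le]
  constructor
  · nlinarith
  · nlinarith [mul_le_mul_of_nonneg_right e2 (Real.exp_nonneg K)]

/-- The first estimate without the constant prefactor. The factor `F * |c|` comes
from subtracting `1` when `n = 0`, and from `expWeight` when `n ≥ 1`. -/
lemma abs_iteratedDeriv_exp_sub_one_le {F M γ c : ℝ} (hγ : 1 ≤ γ) (hF : 0 < F) (hM : 0 < M)
    {y : ℝ → ℝ} (hy : InGevrey F M γ y) {t : ℝ} (ht : 0 ≤ t) (n : ℕ) :
    |iteratedDeriv n (fun s => Real.exp (c * y s) - 1) t| ≤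
      F * |c| * Real.exp (F * |c|) * (M * Real.exp (F * |c|)) ^ n * (n.factorial : ℝ) ^ γ := by
  rcases n with _ | n
  · have h0 := hy.2 0 t ht
    simp only [iteratedDeriv_zero, pow_zero, Nat.factorial_zero, Nat.cast_one,
      Real.one_rpow, mul_one] at h0 ⊢
    refine abs_exp_sub_one_le_mul_exp ?_
    rw [abs_mul, mul_comm F]
    gcongr
  · have h := abs_iteratedDeriv_exp_le (c := c) hγ hF hM hy ht (n + 1)
    have hd : deriv (fun s => Real.exp (c * y s) - 1) = deriv (fun s => Real.exp (c * y s)) := by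
      funext s; exact deriv_sub_const _
    rw [iteratedDeriv_succ', hd, ← iteratedDeriv_succ']
    refine h.trans ?_
    rw [expWeight]
    have hw : (1 + F * |c|) ^ n ≤ Real.exp (F * |c|) ^ (n + 1) := by
      have h1 : 1 + F * |c| ≤ Real.exp (F * |c|) := by
        linarith [Real.add_one_le_exp (F * |c|)]
      have h2 : 1 ≤ Real.exp (F * |c|) := Real.one_le_exp (by positivity)
      calc _ ≤ Real.exp (F * |c|) ^ n := by gcongr
        _ ≤ _ := pow_le_pow_right₀ h2 n.le_succ
    calc _ = F * |c| * Real.exp (F * |c|) * M ^ (n + 1) * ((n + 1).factorial : ℝ) ^ γ *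
          (1 + F * |c|) ^ n := by ring
      _ ≤ F * |c| * Real.exp (F * |c|) * M ^ (n + 1) * ((n + 1).factorial : ℝ) ^ γ *
          Real.exp (F * |c|) ^ (n + 1) := by gcongr
      _ = _ := by rw [mul_pow]; ring

lemma abs_iteratedDeriv_exp_mul_le {F M γ c : ℝ} (hγ : 1 ≤ γ) (hF : 0 < F) (hM : 0 < M)
    {y z : ℝ → ℝ} (hy : InGevrey F M γ y) (hz : InGevrey F M γ z) {t : ℝ} (ht : 0 ≤ t)
    (n : ℕ) :
    |iteratedDeriv n (fun s => Real.exp (c * y s) * z s) t| ≤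
      F * Real.exp (F * |c|) * (M * Real.exp (F * |c|)) ^ n * (n.factorial : ℝ) ^ γ := by
  have hys := hy.1
  have hgs : ContDiff ℝ (⊤ : ℕ∞) (fun s => Real.exp (c * y s)) := by fun_prop
  refine (abs_iteratedDeriv_mul_le (q := expWeight (F * |c|))
    (B := F * Real.exp (F * |c|) * M ^ n * (n.factorial : ℝ) ^ γ)
    hgs hz.1 fun k hk => ?_).trans ?_
  · have h1 := abs_iteratedDeriv_exp_le (c := c) hγ hF hM hy ht k
    have h2 := hz.2 (n - k) t ht
    have hM' : M ^ n = M ^ k * M ^ (n - k) := by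
      rw [← pow_add]; congr 1; omega
    have hq := expWeight_nonneg (K := F * |c|) (by positivity) k
    calc _ ≤ (n.choose k : ℝ) *
          ((Real.exp (F * |c|) * M ^ k * (k.factorial : ℝ) ^ γ * expWeight (F * |c|) k) *
            (F * M ^ (n - k) * ((n - k).factorial : ℝ) ^ γ)) := by gcongr
      _ = F * Real.exp (F * |c|) * M ^ n *
          ((n.choose k : ℝ) * ((k.factorial : ℝ) ^ γ * ((n - k).factorial : ℝ) ^ γ)) *
            expWeight (F * |c|) k := by rw [hM']; ring
      _ ≤ _ := by
        gcongr
        exact choose_mul_rpow_factorial_le hγ hk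
  · have h1 : 1 + F * |c| ≤ Real.exp (F * |c|) := by
      linarith [Real.add_one_le_exp (F * |c|)]
    calc _ = F * Real.exp (F * |c|) * M ^ n * (n.factorial : ℝ) ^ γ * (1 + F * |c|) ^ n := by
          rw [sum_expWeight]
      _ ≤ F * Real.exp (F * |c|) * M ^ n * (n.factorial : ℝ) ^ γ *
          Real.exp (F * |c|) ^ n := by gcongr
      _ = _ := by rw [mul_pow]; ring

/-- Gevrey estimates for the transformed reference outputs `y₁ᵥʳ` and `y₂ᵥʳ`. -/
theorem transformed_outputs_gevrey_bounds (ε a b x₀ γ F M : ℝ)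
    (hε : 0 < ε) (ha : a ≠ 0) (hx₀ : x₀ ∈ Set.Icc (0:ℝ) 1)
    (hγ1 : 1 ≤ γ) (hγ2 : γ < 2) (hF : 0 < F) (hM : 0 < M)
    (y₁ y₂ : ℝ → ℝ) (hy₁ : InGevrey F M γ y₁) (hy₂ : InGevrey F M γ y₂) :
    (∀ n : ℕ, ∀ t : ℝ, 0 ≤ t →
      |iteratedDeriv n (yOneV ε a b x₀ y₁) t| ≤
        (F * (|a| / ε) * Real.exp (F * |a| / ε) * Real.exp (-(a * b / (2 * ε)) * x₀)) *
          (M * Real.exp (F * |a| / ε)) ^ n * (Nat.factorial n : ℝ) ^ γ) ∧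
    (∀ n : ℕ, ∀ t : ℝ, 0 ≤ t →
      |iteratedDeriv n (yTwoV ε a b x₀ y₁ y₂) t| ≤
        (F * (|a| / ε) * Real.exp (F * |a| / ε) * Real.exp (-(a * b / (2 * ε)) * x₀) *
            (Real.exp (-(F * |a| / ε)) + |a * b| / (2 * ε) + F * |a| / ε)) *
          ((1 + F * (|a| / ε) * Real.exp (F * |a| / ε)) * (M * Real.exp (F * |a| / ε))) ^ n *
          (Nat.factorial n : ℝ) ^ γ) := by
  have hc : |(-(a / ε))| = |a| / ε := by rw [abs_neg, abs_div, abs_of_pos hε]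
  have hFc : F * |a| / ε = F * (|a| / ε) := mul_div_assoc _ _ _
  have hone := fun n t (ht : 0 ≤ t) =>
    abs_iteratedDeriv_exp_sub_one_le (c := -(a / ε)) hγ1 hF hM hy₁ ht n
  have htwo := fun n t (ht : 0 ≤ t) =>
    abs_iteratedDeriv_exp_mul_le (c := -(a / ε)) hγ1 hF hM hy₁ hy₂ ht n
  simp only [hc] at hone htwo
  rw [hFc]
  set A := |a| / ε with hA
  have hA0 : 0 ≤ A := by positivity
  set E := Real.exp (-(a * b / (2 * ε)) * x₀) with hE
  have hE0 : 0 ≤ E := Real.exp_nonneg _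
  refine ⟨fun n t ht => ?_, fun n t ht => ?_⟩
  · have h : yOneV ε a b x₀ y₁ = fun s => E * (Real.exp (-(a / ε) * y₁ s) - 1) := rfl
    rw [h, iteratedDeriv_const_mul_field, abs_mul, abs_of_nonneg hE0]
    calc _ ≤ E * _ := mul_le_mul_of_nonneg_left (hone n t ht) hE0
      _ = _ := by ring
  · have h : yTwoV ε a b x₀ y₁ y₂ = fun s => E * (-(a / ε) *
        (Real.exp (-(a / ε) * y₁ s) * y₂ s) -
          a * b / (2 * ε) * (Real.exp (-(a / ε) * y₁ s) - 1)) := by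
      funext s; simp only [yTwoV, hE]; ring
    have hs₁ := hy₁.1
    have hs₂ := hy₂.1
    have hn : ((n : ℕ∞) : WithTop ℕ∞) ≤ ((⊤ : ℕ∞) : WithTop ℕ∞) := by exact_mod_cast le_top
    have hu : ContDiff ℝ (⊤ : ℕ∞)
        (fun s => -(a / ε) * (Real.exp (-(a / ε) * y₁ s) * y₂ s)) := by fun_prop
    have hv : ContDiff ℝ (⊤ : ℕ∞)
        (fun s => a * b / (2 * ε) * (Real.exp (-(a / ε) * y₁ s) - 1)) := by fun_prop
    have hB : |a * b / (2 * ε)| = |a * b| / (2 * ε) := by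
      rw [abs_div, abs_of_pos (by positivity : 0 < 2 * ε)]
    rw [h, iteratedDeriv_const_mul_field,
      iteratedDeriv_fun_sub ((hu.of_le hn).contDiffAt) ((hv.of_le hn).contDiffAt),
      iteratedDeriv_const_mul_field, iteratedDeriv_const_mul_field, abs_mul, abs_of_nonneg hE0]
    have h1 := htwo n t ht
    have h2 := hone n t ht
    set B := |a * b| / (2 * ε) with hBdef
    have hB0 : 0 ≤ B := by positivity
    set X := Real.exp (F * A) with hX
    have hX0 : 0 ≤ X := Real.exp_nonneg _
    have hXX : X * Real.exp (-(F * A)) = 1 := by rw [hX, ← Real.exp_add]; simp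
    have hX2 : X ≤ 1 + F * A * X := by
      nlinarith [Real.add_one_le_exp (-(F * A))]
    set N := (n.factorial : ℝ) ^ γ with hN
    have hN0 : 0 ≤ N := by positivity
    have hpow : (M * X) ^ n ≤ ((1 + F * A * X) * (M * X)) ^ n := by
      have : 0 ≤ F * A * X * (M * X) := by positivity
      exact pow_le_pow_left₀ (by positivity) (by linarith) n
    calc _ ≤ E * (A * (F * X * (M * X) ^ n * N) + B * (F * A * X * (M * X) ^ n * N)) := by
          refine mul_le_mul_of_nonneg_left ((abs_sub _ _).trans ?_) hE0
          rw [abs_mul, abs_mul, hc, hB]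
          gcongr
      _ = E * (F * A) * (X + B * X) * (M * X) ^ n * N := by ring
      _ ≤ E * (F * A) * ((1 + F * A * X) + B * X) * ((1 + F * A * X) * (M * X)) ^ n * N := by
          gcongr
      -- the `exp (-K)` in the constant cancels `X = exp K`, turning `1` into `X * exp (-K)`
      _ = E * (F * A) * (X * Real.exp (-(F * A)) + F * A * X + B * X) *
          ((1 + F * A * X) * (M * X)) ^ n * N := by rw [hXX]
      _ = _ := by ring

end
end

section
/- Let ε > 0, c₂ > 0, a, b ∈ ℝ, t₀ ≥ 0, and set λ = a²b²/(4ε) + c₂. Let p(z,y) = −(c₂/(4ε))·(y + z)·Φ((c₂/(4ε))·(y² − z²)), and define the gains p̄₂(z) = −ε·∂p/∂y(z,−1/2), p̄₁(z) = −ε·∂p/∂y(z,1/2), p₀₀ = −p(−1/2,−1/2), p₁₁ = −p(1/2,1/2). Suppose w̄ : [−1/2,1/2] × [t₀,∞) → ℝ is continuous, twice continuously differentiable in z and once in t on [−1/2,1/2] × (t₀,∞), and satisfies w̄_t(z,t) = ε·w̄_{zz}(z,t) − λ·w̄(z,t) with Neumann boundary conditions w̄_z(−1/2,t) = 0 and w̄_z(1/2,t)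 = 0. Define ē(z,t) = w̄(z,t) − ∫_z^{1/2} p(z,y)·w̄(y,t) dy + ∫_{−1/2}^{−z} p(z,y)·w̄(y,t) dy for 0 ≤ z ≤ 1/2, and ē(z,t) = w̄(z,t) + ∫_{−1/2}^{z} p(z,y)·w̄(y,t) dy − ∫_{−z}^{1/2} p(z,y)·w̄(y,t) dy for −1/2 ≤ z ≤ 0. Then ē satisfies ē_t(z,t) = ε·ē_{zz}(z,t) − (a²b²/(4ε))·ē(z,t) − p̄₂(z)·ē(−1/2,t) − p̄₁(z)·ē(1/2,t) for z ∈ [−1/2,1/2], t > t₀, together with the boundary conditions ē_z(−1/2,t) = −p₀₀·ē(−1/2,t) and ē_z(1/2,t) = −p₁₁·ē(1/2,t). -/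
/-!
On the spatial domain the two branches of the transformation agree and equal
`e(z,t) = w(z,t) + ∫_{1/2}^z p(z,y) w(y,t) dy + ∫_{-1/2}^{-z} p(z,y) w(y,t) dy`,
so no special treatment of `z = 0` is needed. In particular `e = w` at `z = ±1/2`.

The functions `Φ_k(s) = Σ sᵐ/(m!(m+k)!)` satisfy `Φ_k' = Φ_{k+1}` (`hasDerivAt_PhiK`) and
`s Φ_3 + 2 Φ_2 = Φ_1` (`PhiK_ode`); this yields the partial derivatives of `p` and the kernel
equation `ε p_yy - ε p_zz = c₂ p` (`pKer_pde`). Two applications of the Leibniz rule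
(`hasDerivAt_integral_leibniz`) give `e_z` and `e_zz`; differentiating under the integral
(`hasDerivAt_integral_time`), inserting the heat equation and integrating by parts twice
(`green_identity`) gives `e_t`. In `e_t - ε e_zz + (λ - c₂) e` the integrals cancel by the kernel
equation, the terms at `y = z` by `p(z,z) = -(c₂/(2ε)) z`, the terms at `y = -z` by `p(z,-z) = 0`,
and the terms at `y = ±1/2` are the output injections. The boundary conditions hold since at
`z = ±1/2` the two integrals in `e_z` cancel or vanish.

The Leibniz rule is applied to a continuous extension `W` of the time slice of `w` to the line.
-/

noncomputable section

/-- The entire function `Φ(s) = Σ_{m=0}^∞ sᵐ/(m!·(m+1)!)`. -/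
def Phi (s : ℝ) : ℝ :=
  ∑' m : ℕ, s ^ m / ((Nat.factorial m : ℝ) * (Nat.factorial (m + 1) : ℝ))

/-- The backstepping observer kernel `p(z,y) = −(c₂/(4ε))·(y+z)·Φ((c₂/(4ε))(y²−z²))`. -/
def pKer (ε c₂ z y : ℝ) : ℝ :=
  -(c₂ / (4 * ε)) * (y + z) * Phi (c₂ / (4 * ε) * (y ^ 2 - z ^ 2))

/-- The spatial domain `[−1/2, 1/2]`. -/
def strip : Set ℝ := Set.Icc (-(1 / 2 : ℝ)) (1 / 2)

/-! ### The functions `Φ_k` -/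

/-- The entire functions `Φ_k(s) = Σ sᵐ/(m!·(m+k)!)`, which satisfy `Φ_k' = Φ_{k+1}`;
`Phi` is `Φ_1`. -/
def PhiK (k : ℕ) (s : ℝ) : ℝ :=
  ∑' m : ℕ, s ^ m / ((Nat.factorial m : ℝ) * (Nat.factorial (m + k) : ℝ))

lemma Phi_eq_PhiK (s : ℝ) : Phi s = PhiK 1 s := rfl

lemma summable_PhiK (k : ℕ) (s : ℝ) :
    Summable fun m : ℕ => s ^ m / ((Nat.factorial m : ℝ) * (Nat.factorial (m + k) : ℝ)) := by
  refine Summable.of_norm_bounded (Real.summable_pow_div_factorial |s|) fun m => ?_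
  have h1 : (1 : ℝ) ≤ (Nat.factorial (m + k) : ℝ) := by exact_mod_cast Nat.factorial_pos _
  have h2 : (0 : ℝ) < (Nat.factorial m : ℝ) := by exact_mod_cast Nat.factorial_pos _
  rw [Real.norm_eq_abs, abs_div, abs_pow, abs_of_pos (by positivity : (0 : ℝ) <
    (Nat.factorial m : ℝ) * (Nat.factorial (m + k) : ℝ))]
  gcongr
  nlinarith

lemma hasDerivAt_PhiK (k : ℕ) (s : ℝ) : HasDerivAt (PhiK k) (PhiK (k + 1) s) s := by
  set R : ℝ := |s| + 1 with hR
  have hs : s ∈ Metric.ball (0 : ℝ) R := by simp [hR]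
  have hu : Summable fun m : ℕ =>
      (m : ℝ) * R ^ (m - 1) / (Nat.factorial m : ℝ) := by
    rw [← summable_nat_add_iff 1]
    refine (Real.summable_pow_div_factorial R).congr fun m => ?_
    rw [Nat.factorial_succ]
    have h2 : (0 : ℝ) < (Nat.factorial m : ℝ) := by exact_mod_cast Nat.factorial_pos _
    push_cast
    field_simp
  have key := hasDerivAt_tsum_of_isPreconnected
    (g := fun (m : ℕ) (x : ℝ) =>
      x ^ m / ((Nat.factorial m : ℝ) * (Nat.factorial (m + k) : ℝ)))
    (g' := fun (m : ℕ) (x : ℝ) =>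
      (m : ℝ) * x ^ (m - 1) / ((Nat.factorial m : ℝ) * (Nat.factorial (m + k) : ℝ)))
    hu Metric.isOpen_ball (convex_ball (0 : ℝ) R).isPreconnected
    (fun m x _ => (hasDerivAt_pow m x).div_const _)
    (fun m x hx => by
      have h1 : (1 : ℝ) ≤ (Nat.factorial (m + k) : ℝ) := by exact_mod_cast Nat.factorial_pos _
      have h2 : (0 : ℝ) < (Nat.factorial m : ℝ) := by exact_mod_cast Nat.factorial_pos _
      have hx' : |x| ≤ R := by simpa using (Metric.mem_ball.1 hx).le
      rw [Real.norm_eq_abs, abs_div, abs_mul, abs_pow, Nat.abs_cast, abs_of_pos (by positivity :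
        (0 : ℝ) < (Nat.factorial m : ℝ) * (Nat.factorial (m + k) : ℝ))]
      gcongr
      nlinarith)
    hs (summable_PhiK k s) hs
  refine key.congr_deriv ?_
  -- the zeroth term of the differentiated series vanishes; shift the index by one
  have hsum : Summable fun m : ℕ =>
      (m : ℝ) * s ^ (m - 1) / ((Nat.factorial m : ℝ) * (Nat.factorial (m + k) : ℝ)) := by
    rw [← summable_nat_add_iff 1]
    refine (summable_PhiK (k + 1) s).congr fun m => ?_
    rw [Nat.factorial_succ, show m + 1 + k = m + (k + 1) by ring]
    have h2 : (0 : ℝ) < (Nat.factorial m : ℝ) := by exact_mod_cast Nat.factorial_pos _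
    push_cast
    field_simp
  rw [hsum.tsum_eq_zero_add]
  simp only [Nat.cast_zero, zero_mul, zero_div, zero_add, PhiK]
  refine tsum_congr fun m => ?_
  rw [Nat.factorial_succ, show m + 1 + k = m + (k + 1) by ring]
  have h2 : (0 : ℝ) < (Nat.factorial m : ℝ) := by exact_mod_cast Nat.factorial_pos _
  push_cast
  field_simp

lemma continuous_PhiK (k : ℕ) : Continuous (PhiK k) :=
  continuous_iff_continuousAt.2 fun s => (hasDerivAt_PhiK k s).continuousAt

/-- The Bessel-type equation `s Φ'' + 2 Φ' = Φ` for `Φ = Φ_1`. -/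
lemma PhiK_ode (s : ℝ) : s * PhiK 3 s + 2 * PhiK 2 s = PhiK 1 s := by
  have e1 : s * PhiK 3 s = ∑' m : ℕ,
      (m : ℝ) * s ^ m / ((Nat.factorial m : ℝ) * (Nat.factorial (m + 2) : ℝ)) ∧
      Summable fun m : ℕ =>
        (m : ℝ) * s ^ m / ((Nat.factorial m : ℝ) * (Nat.factorial (m + 2) : ℝ)) := by
    have hterm : ∀ m : ℕ, s * (s ^ m / ((Nat.factorial m : ℝ) * (Nat.factorial (m + 3) : ℝ))) =
        ((m + 1 : ℕ) : ℝ) * s ^ (m + 1) /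
          ((Nat.factorial (m + 1) : ℝ) * (Nat.factorial (m + 1 + 2) : ℝ)) := fun m => by
      rw [Nat.factorial_succ m, show m + 1 + 2 = m + 3 by ring]
      have h2 : (0 : ℝ) < (Nat.factorial m : ℝ) := by exact_mod_cast Nat.factorial_pos _
      push_cast
      field_simp
      ring
    have hsum : Summable fun m : ℕ =>
        (m : ℝ) * s ^ m / ((Nat.factorial m : ℝ) * (Nat.factorial (m + 2) : ℝ)) := by
      rw [← summable_nat_add_iff 1]
      exact ((summable_PhiK 3 s).mul_left s).congr hterm
    refine ⟨?_, hsum⟩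
    rw [hsum.tsum_eq_zero_add, PhiK, ← tsum_mul_left]
    simp only [Nat.cast_zero, zero_mul, zero_div, zero_add]
    exact tsum_congr hterm
  rw [e1.1, PhiK, ← tsum_mul_left, ← e1.2.tsum_add ((summable_PhiK 2 s).mul_left 2), PhiK]
  refine tsum_congr fun m => ?_
  rw [show m + 2 = (m + 1) + 1 by ring, Nat.factorial_succ (m + 1)]
  have h2 : (0 : ℝ) < (Nat.factorial m : ℝ) := by exact_mod_cast Nat.factorial_pos _
  have h3 : (0 : ℝ) < (Nat.factorial (m + 1) : ℝ) := by exact_mod_cast Nat.factorial_pos _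
  push_cast
  field_simp
  ring

/-! ### The kernel -/

/-- The partial derivative `∂p/∂z`, with `κ = c₂/(4ε)`. -/
def pKz (κ z y : ℝ) : ℝ :=
  -κ * PhiK 1 (κ * (y ^ 2 - z ^ 2)) + 2 * κ ^ 2 * z * (y + z) * PhiK 2 (κ * (y ^ 2 - z ^ 2))

/-- The partial derivative `∂²p/∂z²`, with `κ = c₂/(4ε)`. -/
def pKzz (κ z y : ℝ) : ℝ :=
  2 * κ ^ 2 * (y + 3 * z) * PhiK 2 (κ * (y ^ 2 - z ^ 2))
    - 4 * κ ^ 3 * z ^ 2 * (y + z) * PhiK 3 (κ * (y ^ 2 - z ^ 2))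

/-- The partial derivative `∂p/∂y`, with `κ = c₂/(4ε)`. -/
def pKy (κ z y : ℝ) : ℝ :=
  -κ * PhiK 1 (κ * (y ^ 2 - z ^ 2)) - 2 * κ ^ 2 * y * (y + z) * PhiK 2 (κ * (y ^ 2 - z ^ 2))

/-- The partial derivative `∂²p/∂y²`, with `κ = c₂/(4ε)`. -/
def pKyy (κ z y : ℝ) : ℝ :=
  -2 * κ ^ 2 * (3 * y + z) * PhiK 2 (κ * (y ^ 2 - z ^ 2))
    - 4 * κ ^ 3 * y ^ 2 * (y + z) * PhiK 3 (κ * (y ^ 2 - z ^ 2))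

lemma hasDerivAt_PhiK_z (k : ℕ) (κ z y : ℝ) :
    HasDerivAt (fun z => PhiK k (κ * (y ^ 2 - z ^ 2)))
      (PhiK (k + 1) (κ * (y ^ 2 - z ^ 2)) * (-2 * κ * z)) z := by
  refine (hasDerivAt_PhiK k _).comp z ?_
  refine (((hasDerivAt_pow 2 z).const_sub (y ^ 2)).const_mul κ).congr_deriv ?_
  push_cast
  ring

lemma hasDerivAt_PhiK_y (k : ℕ) (κ z y : ℝ) :
    HasDerivAt (fun y => PhiK k (κ * (y ^ 2 - z ^ 2)))
      (PhiK (k + 1) (κ * (y ^ 2 - z ^ 2)) * (2 * κ * y)) y := by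
  refine (hasDerivAt_PhiK k _).comp y ?_
  refine (((hasDerivAt_pow 2 y).sub_const (z ^ 2)).const_mul κ).congr_deriv ?_
  push_cast
  ring

lemma hasDerivAt_pKer_z (ε c z y : ℝ) :
    HasDerivAt (fun z => pKer ε c z y) (pKz (c / (4 * ε)) z y) z := by
  unfold pKer pKz
  simp only [Phi_eq_PhiK]
  generalize c / (4 * ε) = κ
  refine ((((hasDerivAt_id z).const_add y).const_mul (-κ)).mul
    (hasDerivAt_PhiK_z 1 κ z y)).congr_deriv ?_
  simp only [id]
  ring

lemma hasDerivAt_pKer_y (ε c z y : ℝ) :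
    HasDerivAt (fun y => pKer ε c z y) (pKy (c / (4 * ε)) z y) y := by
  unfold pKer pKy
  simp only [Phi_eq_PhiK]
  generalize c / (4 * ε) = κ
  refine ((((hasDerivAt_id y).add_const z).const_mul (-κ)).mul
    (hasDerivAt_PhiK_y 1 κ z y)).congr_deriv ?_
  simp only [id]
  ring

lemma hasDerivAt_pKz (κ z y : ℝ) :
    HasDerivAt (fun z => pKz κ z y) (pKzz κ z y) z := by
  unfold pKz pKzz
  refine (((hasDerivAt_PhiK_z 1 κ z y).const_mul (-κ)).add
    ((((hasDerivAt_id z).const_mul (2 * κ ^ 2)).mul ((hasDerivAt_id z).const_add y)).mul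
    (hasDerivAt_PhiK_z 2 κ z y))).congr_deriv ?_
  simp only [id, Pi.mul_apply]
  ring

lemma hasDerivAt_pKy (κ z y : ℝ) :
    HasDerivAt (fun y => pKy κ z y) (pKyy κ z y) y := by
  unfold pKy pKyy
  refine (((hasDerivAt_PhiK_y 1 κ z y).const_mul (-κ)).sub
    ((((hasDerivAt_id y).const_mul (2 * κ ^ 2)).mul ((hasDerivAt_id y).add_const z)).mul
    (hasDerivAt_PhiK_y 2 κ z y))).congr_deriv ?_
  simp only [id, Pi.mul_apply]
  ring

/-- The kernel equation `ε p_yy - ε p_zz = c₂ p`. -/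
lemma pKer_pde {ε : ℝ} (hε : ε ≠ 0) (c z y : ℝ) :
    ε * pKyy (c / (4 * ε)) z y - ε * pKzz (c / (4 * ε)) z y = c * pKer ε c z y := by
  have hc : c = 4 * ε * (c / (4 * ε)) := by field_simp
  unfold pKyy pKzz pKer
  rw [Phi_eq_PhiK]
  generalize c / (4 * ε) = κ at *
  rw [hc, ← PhiK_ode]
  ring

lemma pKer_antidiag (ε c z : ℝ) : pKer ε c z (-z) = 0 := by simp [pKer]

lemma pKer_diag (ε c z : ℝ) : pKer ε c z z = -(2 * (c / (4 * ε))) * z := by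
  have h : PhiK 1 0 = 1 := by
    rw [PhiK, tsum_eq_single 0 fun m hm => by simp [hm]]
    simp
  unfold pKer
  rw [sub_self, mul_zero, Phi_eq_PhiK, h]
  ring

/-- The chain rule for the vanishing of `p` on the antidiagonal. -/
lemma pKy_antidiag (κ z : ℝ) : pKy κ z (-z) = pKz κ z (-z) := by simp [pKy, pKz]

/-- The chain rule for `p(z,z) = -2κz`. -/
lemma pKy_add_pKz_diag (κ z : ℝ) : pKy κ z z + pKz κ z z = -(2 * κ) := by
  have h : PhiK 1 0 = 1 := by
    rw [PhiK, tsum_eq_single 0 fun m hm => by simp [hm]]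
    simp
  unfold pKy pKz
  rw [sub_self, mul_zero, h]
  ring

lemma continuous_pKer (ε c : ℝ) : Continuous fun q : ℝ × ℝ => pKer ε c q.1 q.2 := by
  have := continuous_PhiK 1
  unfold pKer
  simp only [Phi_eq_PhiK]
  fun_prop

lemma continuous_pKz (κ : ℝ) : Continuous fun q : ℝ × ℝ => pKz κ q.1 q.2 := by
  have := continuous_PhiK 1
  have := continuous_PhiK 2
  unfold pKz
  fun_prop

lemma continuous_pKzz (κ : ℝ) : Continuous fun q : ℝ × ℝ => pKzz κ q.1 q.2 := by
  have := continuous_PhiK 2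
  have := continuous_PhiK 3
  unfold pKzz
  fun_prop

lemma continuous_pKy (κ : ℝ) : Continuous fun q : ℝ × ℝ => pKy κ q.1 q.2 := by
  have := continuous_PhiK 1
  have := continuous_PhiK 2
  unfold pKy
  fun_prop

lemma continuous_pKyy (κ : ℝ) : Continuous fun q : ℝ × ℝ => pKyy κ q.1 q.2 := by
  have := continuous_PhiK 2
  have := continuous_PhiK 3
  unfold pKyy
  fun_prop

/-! ### Differentiation and integration by parts -/

/-- Differentiation under the integral sign over a fixed interval, with continuity of the
derivative only on a compact neighbourhood. -/
lemma hasDerivAt_integral_param {f f' : ℝ → ℝ → ℝ} {a b x₀ δ : ℝ} (hδ : 0 < δ)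
    (hf : ∀ x ∈ Metric.closedBall x₀ δ, ContinuousOn (f x) (Set.uIcc a b))
    (hd : ∀ y ∈ Set.uIcc a b, ∀ x ∈ Metric.closedBall x₀ δ,
      HasDerivAt (fun x' => f x' y) (f' x y) x)
    (hc : ContinuousOn (fun q : ℝ × ℝ => f' q.1 q.2)
      (Metric.closedBall x₀ δ ×ˢ Set.uIcc a b)) :
    HasDerivAt (fun x => ∫ y in a..b, f x y) (∫ y in a..b, f' x₀ y) x₀ := by
  obtain ⟨C, hC⟩ := ((isCompact_closedBall x₀ δ).prod isCompact_uIcc).exists_bound_of_continuousOn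
    hc
  have hx₀ : x₀ ∈ Metric.closedBall x₀ δ := Metric.mem_closedBall_self hδ.le
  have hnh : Metric.closedBall x₀ δ ∈ nhds x₀ := Metric.closedBall_mem_nhds _ hδ
  have hf'c : ContinuousOn (f' x₀) (Set.uIcc a b) :=
    hc.comp (f := fun y => (x₀, y)) (by fun_prop) fun y hy => ⟨hx₀, hy⟩
  refine (intervalIntegral.hasDerivAt_integral_of_dominated_loc_of_deriv_le
    (bound := fun _ => C) (s := Metric.closedBall x₀ δ) hnh ?_ ?_ ?_ ?_ ?_ ?_).2
  · filter_upwards [hnh] with x hx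
    exact ((hf x hx).mono Set.uIoc_subset_uIcc).aestronglyMeasurable measurableSet_uIoc
  · exact (hf x₀ hx₀).intervalIntegrable
  · exact (hf'c.mono Set.uIoc_subset_uIcc).aestronglyMeasurable measurableSet_uIoc
  · exact Filter.Eventually.of_forall fun y hy x hx => hC (x, y) ⟨hx, Set.uIoc_subset_uIcc hy⟩
  · exact intervalIntegrable_const
  · exact Filter.Eventually.of_forall fun y hy x hx => hd y (Set.uIoc_subset_uIcc hy) x hx

/-- The Leibniz rule for an integral with a moving upper limit. It is the chain rule along
`z ↦ (z, g z)` for `(z, x) ↦ ∫_a^x f(z, y) dy`, which has continuous partial derivatives. -/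
lemma hasDerivAt_integral_leibniz {f f' : ℝ → ℝ → ℝ} {g : ℝ → ℝ} {a z g' : ℝ}
    (hf : Continuous (fun q : ℝ × ℝ => f q.1 q.2))
    (hf' : Continuous (fun q : ℝ × ℝ => f' q.1 q.2))
    (hd : ∀ x y, HasDerivAt (fun x' => f x' y) (f' x y) x)
    (hg : HasDerivAt g g' z) :
    HasDerivAt (fun z' => ∫ y in a..g z', f z' y)
      ((∫ y in a..g z, f' z y) + f z (g z) * g') z := by
  have h1 : ∀ v : ℝ × ℝ, HasDerivAt (fun x => ∫ y in a..v.2, f x y)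
      (∫ y in a..v.2, f' v.1 y) v.1 := fun v =>
    hasDerivAt_integral_param one_pos
      (fun x _ => (hf.comp (Continuous.prodMk_right x)).continuousOn)
      (fun y _ x _ => hd x y) hf'.continuousOn
  have h2 : ∀ v : ℝ × ℝ, HasDerivAt (fun x => ∫ y in a..x, f v.1 y) (f v.1 v.2) v.2 := fun v =>
    intervalIntegral.integral_hasDerivAt_right
      ((hf.comp (Continuous.prodMk_right v.1)).intervalIntegrable _ _)
      (hf.comp (Continuous.prodMk_right v.1)).stronglyMeasurable.stronglyMeasurableAtFilter
      (hf.comp (Continuous.prodMk_right v.1)).continuousAt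
  have hc1 : Continuous fun v : ℝ × ℝ => ∫ y in a..v.2, f' v.1 y :=
    intervalIntegral.continuous_parametric_primitive_of_continuous hf'
  have hs := hasStrictFDerivAt_uncurry_coprod (𝕜 := ℝ) (u := (z, g z))
    (f := fun x b => ∫ y in a..b, f x y)
    (f₁ := fun x b => ContinuousLinearMap.toSpanSingleton ℝ (∫ y in a..b, f' x y))
    (f₂ := fun x b => ContinuousLinearMap.toSpanSingleton ℝ (f x b))
    (Filter.Eventually.of_forall fun v => (h1 v).hasFDerivAt)
    (Filter.Eventually.of_forall fun v => (h2 v).hasFDerivAt)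
    (((ContinuousLinearMap.toSpanSingletonCLE (𝕜 := ℝ) (E := ℝ)).continuous.comp hc1).continuousAt)
    (((ContinuousLinearMap.toSpanSingletonCLE (𝕜 := ℝ) (E := ℝ)).continuous.comp hf).continuousAt)
  have := hs.hasFDerivAt.comp_hasDerivAt z ((hasDerivAt_id z).prodMk hg)
  refine this.congr_deriv ?_
  simp [Function.HasUncurry.uncurry, mul_comm]

/-- The spatial derivative of the integral part of the transformation, for a kernel `k`
with `z`-derivative `k'` and a continuous profile `W`. -/
lemma hasDerivAt_transform {k k' : ℝ → ℝ → ℝ} {W : ℝ → ℝ} (hW : Continuous W)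
    (hk : Continuous fun q : ℝ × ℝ => k q.1 q.2) (hk' : Continuous fun q : ℝ × ℝ => k' q.1 q.2)
    (hd : ∀ z y, HasDerivAt (fun z => k z y) (k' z y) z) (z : ℝ) :
    HasDerivAt (fun z => (∫ y in (1 / 2 : ℝ)..z, k z y * W y)
        + ∫ y in (-(1 / 2 : ℝ))..(-z), k z y * W y)
      (k z z * W z - k z (-z) * W (-z) + ((∫ y in (1 / 2 : ℝ)..z, k' z y * W y)
        + ∫ y in (-(1 / 2 : ℝ))..(-z), k' z y * W y)) z := by
  have h1 := hasDerivAt_integral_leibniz (f := fun z y => k z y * W y)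
    (f' := fun z y => k' z y * W y) (a := 1 / 2) (by fun_prop) (by fun_prop)
    (fun x y => (hd x y).mul_const (W y)) (hasDerivAt_id z)
  have h2 := hasDerivAt_integral_leibniz (f := fun z y => k z y * W y)
    (f' := fun z y => k' z y * W y) (a := -(1 / 2)) (by fun_prop) (by fun_prop)
    (fun x y => (hd x y).mul_const (W y)) (hasDerivAt_neg z)
  refine (h1.add h2).congr_deriv ?_
  simp only [id]
  ring

/-- Green's identity on a subinterval of the spatial domain, for a smooth `p` and a function `w`
differentiable up to the boundary; `W` is a continuous extension of `w`. -/
lemma green_identity {p p₁ p₂ w w₁ w₂ W : ℝ → ℝ} {α β : ℝ} (hαβ : α ≤ β)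
    (hα : -(1 / 2) ≤ α) (hβ : β ≤ 1 / 2) (hW : Continuous W) (hWw : ∀ y ∈ strip, W y = w y)
    (h₁ : ∀ y ∈ strip, HasDerivWithinAt w (w₁ y) strip y)
    (h₂ : ∀ y ∈ strip, HasDerivWithinAt w₁ (w₂ y) strip y)
    (hc₂ : ContinuousOn w₂ strip)
    (hp : ∀ y, HasDerivAt p (p₁ y) y) (hp₁ : ∀ y, HasDerivAt p₁ (p₂ y) y)
    (hp₂ : Continuous p₂) :
    ∫ y in α..β, p y * w₂ y =
      (p β * w₁ β - p₁ β * w β) - (p α * w₁ α - p₁ α * w α) + ∫ y in α..β, p₂ y * W y := by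
  have hsub : Set.Icc α β ⊆ strip := Set.Icc_subset_Icc hα hβ
  have hcp : Continuous p := continuous_iff_continuousAt.2 fun y => (hp y).continuousAt
  have hcp₁ : Continuous p₁ := continuous_iff_continuousAt.2 fun y => (hp₁ y).continuousAt
  have hcw : ContinuousOn w strip := fun y hy => (h₁ y hy).continuousWithinAt
  have hcw₁ : ContinuousOn w₁ strip := fun y hy => (h₂ y hy).continuousWithinAt
  have hi1 : IntervalIntegrable (fun y => p y * w₂ y) MeasureTheory.volume α β := by
    apply ContinuousOn.intervalIntegrable
    rw [Set.uIcc_of_le hαβ]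
    exact hcp.continuousOn.mul (hc₂.mono hsub)
  have hi2 : IntervalIntegrable (fun y => p₂ y * W y)
      MeasureTheory.volume α β := (hp₂.mul hW).intervalIntegrable _ _
  have hcont : ContinuousOn (fun y => p y * w₁ y - p₁ y * w y) (Set.Icc α β) :=
    (hcp.continuousOn.mul (hcw₁.mono hsub)).sub (hcp₁.continuousOn.mul (hcw.mono hsub))
  have hder : ∀ y ∈ Set.Ioo α β,
      HasDerivAt (fun y => p y * w₁ y - p₁ y * w y) (p y * w₂ y - p₂ y * W y) y := fun y hy => by
    have hys : y ∈ strip := hsub (Set.Ioo_subset_Icc_self hy)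
    have hn : strip ∈ nhds y := Icc_mem_nhds (by linarith [hy.1]) (by linarith [hy.2])
    have d₁ := (h₁ y hys).hasDerivAt hn
    have d₂ := (h₂ y hys).hasDerivAt hn
    refine (((hp y).mul d₂).sub ((hp₁ y).mul d₁)).congr_deriv ?_
    rw [hWw y hys]
    ring
  have key := intervalIntegral.integral_eq_sub_of_hasDerivAt_of_le hαβ hcont hder (hi1.sub hi2)
  rw [intervalIntegral.integral_sub hi1 hi2] at key
  linarith

/-- The time derivative of `∫ p(y) w(y,t) dy` over a subinterval of the spatial domain. -/
lemma hasDerivAt_integral_time {p : ℝ → ℝ} {w wt : ℝ → ℝ → ℝ} {t₀ t α β : ℝ} (ht : t₀ < t)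
    (hp : Continuous p) (hsub : Set.uIcc α β ⊆ strip)
    (hw : ∀ s, t₀ < s → ContinuousOn (fun y => w y s) strip)
    (hwt : ∀ z ∈ strip, ∀ t : ℝ, t₀ < t → HasDerivAt (fun s => w z s) (wt z t) t)
    (hcwt : ContinuousOn (fun q : ℝ × ℝ => wt q.1 q.2) (strip ×ˢ Set.Ioi t₀)) :
    HasDerivAt (fun s => ∫ y in α..β, p y * w y s) (∫ y in α..β, p y * wt y t) t := by
  have hball : ∀ s ∈ Metric.closedBall t ((t - t₀) / 2), t₀ < s := fun s hs => by
    rw [Metric.mem_closedBall, Real.dist_eq, abs_le] at hs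
    linarith [hs.1]
  refine hasDerivAt_integral_param (f := fun s y => p y * w y s)
    (f' := fun s y => p y * wt y s) (δ := (t - t₀) / 2) (by linarith) ?_ ?_ ?_
  · exact fun s hs => hp.continuousOn.mul ((hw s (hball s hs)).mono hsub)
  · exact fun y hy s hs => (hwt y (hsub hy) s (hball s hs)).const_mul (p y)
  · refine (hp.comp continuous_snd).continuousOn.mul
      (hcwt.comp (f := fun q : ℝ × ℝ => (q.2, q.1)) (by fun_prop) ?_)
    exact fun q hq => ⟨hsub hq.2, hball q.1 hq.1⟩

/-! ### The transformed system -/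

/-- The bilateral observer backstepping transformation maps the exponentially stable
Neumann target heat system `w̄_t = ε w̄_{zz} − λ w̄`, `w̄_z(±1/2,t) = 0`,
into the observer-error system with output-injection gains `p̄₂, p̄₁, p₀₀, p₁₁`. -/
theorem observer_error_target_system (ε c₂ a b t₀ : ℝ)
    (hε : 0 < ε) (hc₂ : 0 < c₂) (ht₀ : 0 ≤ t₀)
    (lam : ℝ) (hlam : lam = a ^ 2 * b ^ 2 / (4 * ε) + c₂)
    (pbar₂ pbar₁ : ℝ → ℝ) (p₀₀ p₁₁ : ℝ)
    (hpbar₂ : ∀ z : ℝ, pbar₂ z = -ε * deriv (fun y => pKer ε c₂ z y) (-(1 / 2 : ℝ)))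
    (hpbar₁ : ∀ z : ℝ, pbar₁ z = -ε * deriv (fun y => pKer ε c₂ z y) (1 / 2 : ℝ))
    (hp₀₀ : p₀₀ = -pKer ε c₂ (-(1 / 2 : ℝ)) (-(1 / 2 : ℝ)))
    (hp₁₁ : p₁₁ = -pKer ε c₂ (1 / 2 : ℝ) (1 / 2 : ℝ))
    (wbar wt wz wzz : ℝ → ℝ → ℝ)
    (hwc : ContinuousOn (fun q : ℝ × ℝ => wbar q.1 q.2) (strip ×ˢ Set.Ici t₀))
    (hwz : ∀ z ∈ strip, ∀ t : ℝ, t₀ < t →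
      HasDerivWithinAt (fun z' => wbar z' t) (wz z t) strip z)
    (hwzz : ∀ z ∈ strip, ∀ t : ℝ, t₀ < t →
      HasDerivWithinAt (fun z' => wz z' t) (wzz z t) strip z)
    (hwt : ∀ z ∈ strip, ∀ t : ℝ, t₀ < t →
      HasDerivAt (fun s => wbar z s) (wt z t) t)
    (hcwz : ContinuousOn (fun q : ℝ × ℝ => wz q.1 q.2) (strip ×ˢ Set.Ioi t₀))
    (hcwzz : ContinuousOn (fun q : ℝ × ℝ => wzz q.1 q.2) (strip ×ˢ Set.Ioi t₀))
    (hcwt : ContinuousOn (fun q : ℝ × ℝ => wt q.1 q.2) (strip ×ˢ Set.Ioi t₀))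
    (hpde : ∀ z ∈ strip, ∀ t : ℝ, t₀ < t → wt z t = ε * wzz z t - lam * wbar z t)
    (hbcL : ∀ t : ℝ, t₀ < t → wz (-(1 / 2 : ℝ)) t = 0)
    (hbcR : ∀ t : ℝ, t₀ < t → wz (1 / 2 : ℝ) t = 0)
    (ebar : ℝ → ℝ → ℝ)
    (hebarPos : ∀ z : ℝ, 0 ≤ z → ∀ t : ℝ,
      ebar z t = wbar z t - (∫ y in z..(1 / 2 : ℝ), pKer ε c₂ z y * wbar y t)
        + ∫ y in (-(1 / 2 : ℝ))..(-z), pKer ε c₂ z y * wbar y t)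
    (hebarNeg : ∀ z : ℝ, z ≤ 0 → ∀ t : ℝ,
      ebar z t = wbar z t + (∫ y in (-(1 / 2 : ℝ))..z, pKer ε c₂ z y * wbar y t)
        - ∫ y in (-z)..(1 / 2 : ℝ), pKer ε c₂ z y * wbar y t) :
    (∀ z ∈ strip, ∀ t : ℝ, t₀ < t →
      deriv (fun s => ebar z s) t =
        ε * derivWithin (fun z' => derivWithin (fun z'' => ebar z'' t) strip z') strip z
          - a ^ 2 * b ^ 2 / (4 * ε) * ebar z t
          - pbar₂ z * ebar (-(1 / 2 : ℝ)) t
          - pbar₁ z * ebar (1 / 2 : ℝ) t) ∧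
    (∀ t : ℝ, t₀ < t →
      derivWithin (fun z => ebar z t) strip (-(1 / 2 : ℝ)) =
        -p₀₀ * ebar (-(1 / 2 : ℝ)) t) ∧
    (∀ t : ℝ, t₀ < t →
      derivWithin (fun z => ebar z t) strip (1 / 2 : ℝ) =
        -p₁₁ * ebar (1 / 2 : ℝ) t) := by
  have hL : (-(1 / 2 : ℝ)) ∈ strip := ⟨le_rfl, by norm_num⟩
  have hR : (1 / 2 : ℝ) ∈ strip := ⟨by norm_num, le_rfl⟩
  have hneg : ∀ z ∈ strip, -z ∈ strip := fun z hz => ⟨by linarith [hz.2], by linarith [hz.1]⟩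
  have huniq : UniqueDiffOn ℝ strip := uniqueDiffOn_Icc (by norm_num)
  have hsub : ∀ u ∈ strip, ∀ v ∈ strip, Set.uIcc u v ⊆ strip := fun u hu v hv =>
    Set.uIcc_subset_Icc hu hv
  have hpc : ∀ z, Continuous fun y => pKer ε c₂ z y := fun z =>
    (continuous_pKer ε c₂).comp (.prodMk_right z)
  have hwslice : ∀ t, t₀ < t → ContinuousOn (fun y => wbar y t) strip := fun t ht y hy =>
    (hwz y hy t ht).continuousWithinAt
  have hint : ∀ z, ∀ t, t₀ < t → ∀ u ∈ strip, ∀ v ∈ strip,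
      IntervalIntegrable (fun y => pKer ε c₂ z y * wbar y t) MeasureTheory.volume u v :=
    fun z t ht u hu v hv =>
      ((hpc z).continuousOn.mul ((hwslice t ht).mono (hsub u hu v hv))).intervalIntegrable
  -- on the spatial domain the two branches of the transformation are the same expression
  have hE : ∀ z ∈ strip, ∀ t, t₀ < t → ebar z t = wbar z t +
      ((∫ y in (1 / 2 : ℝ)..z, pKer ε c₂ z y * wbar y t)
        + ∫ y in (-(1 / 2 : ℝ))..(-z), pKer ε c₂ z y * wbar y t) := by
    intro z hz t ht
    rcases le_total 0 z with h | h
    · rw [hebarPos z h t, intervalIntegral.integral_symm z]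
      ring
    · have h1 := intervalIntegral.integral_add_adjacent_intervals
        (hint z t ht _ hL _ hz) (hint z t ht _ hz _ hR)
      have h2 := intervalIntegral.integral_add_adjacent_intervals
        (hint z t ht _ hL _ (hneg z hz)) (hint z t ht _ (hneg z hz) _ hR)
      rw [hebarNeg z h t, intervalIntegral.integral_symm z (1 / 2)]
      linarith
  have hEL : ∀ t, t₀ < t → ebar (-(1 / 2)) t = wbar (-(1 / 2)) t := fun t ht => by
    rw [hE _ hL t ht, neg_neg, intervalIntegral.integral_symm (-(1 / 2))]
    ring
  have hER : ∀ t, t₀ < t → ebar (1 / 2) t = wbar (1 / 2) t := fun t ht => by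
    rw [hE _ hR t ht]
    simp
  -- a continuous extension of each time slice to the whole line
  have hext : ∀ t, t₀ < t → ∃ W : ℝ → ℝ, Continuous W ∧ ∀ y ∈ strip, W y = wbar y t :=
    fun t ht => ⟨Set.IccExtend (by norm_num) (Set.domRestrict _ fun y => wbar y t),
      (hwslice t ht).domRestrict.Icc_extend', fun y hy => Set.IccExtend_of_mem _ _ hy⟩
  have hcongr : ∀ t, ∀ W : ℝ → ℝ, (∀ y ∈ strip, W y = wbar y t) → ∀ k : ℝ → ℝ,
      ∀ u ∈ strip, ∀ v ∈ strip, ∫ y in u..v, k y * wbar y t = ∫ y in u..v, k y * W y :=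
    fun t W hW k u hu v hv => intervalIntegral.integral_congr fun y hy => by
      simp only [hW y (hsub u hu v hv hy)]
  have hEz : ∀ t, t₀ < t → ∀ W : ℝ → ℝ, Continuous W → (∀ y ∈ strip, W y = wbar y t) →
      ∀ z ∈ strip, derivWithin (fun z => ebar z t) strip z = wz z t +
        (pKer ε c₂ z z * wbar z t + ((∫ y in (1 / 2 : ℝ)..z, pKz (c₂ / (4 * ε)) z y * W y)
          + ∫ y in (-(1 / 2 : ℝ))..(-z), pKz (c₂ / (4 * ε)) z y * W y)) := by
    intro t ht W hWc hW z hz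
    have h1 := (hasDerivAt_transform hWc (continuous_pKer ε c₂) (continuous_pKz (c₂ / (4 * ε)))
      (hasDerivAt_pKer_z ε c₂) z).hasDerivWithinAt (s := strip)
    have h2 := ((hwz z hz t ht).add h1).congr (f₁ := fun z => ebar z t) (fun x hx => by
      rw [hE x hx t ht, hcongr t W hW _ _ hR _ hx, hcongr t W hW _ _ hL _ (hneg x hx)]
      rfl) (by
      rw [hE z hz t ht, hcongr t W hW _ _ hR _ hz, hcongr t W hW _ _ hL _ (hneg z hz)]
      rfl)
    rw [h2.derivWithin (huniq z hz), pKer_antidiag, hW z hz]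
    ring
  refine ⟨fun z hz t ht => ?_, fun t ht => ?_, fun t ht => ?_⟩
  · obtain ⟨W, hWc, hW⟩ := hext t ht
    have hzn := hneg z hz
    have hEzz : derivWithin (fun z' => derivWithin (fun z'' => ebar z'' t) strip z') strip z =
        wzz z t + (-(2 * (c₂ / (4 * ε))) * wbar z t + pKer ε c₂ z z * wz z t
          + (pKz (c₂ / (4 * ε)) z z * wbar z t - pKz (c₂ / (4 * ε)) z (-z) * wbar (-z) t
          + ((∫ y in (1 / 2 : ℝ)..z, pKzz (c₂ / (4 * ε)) z y * W y)
          + ∫ y in (-(1 / 2 : ℝ))..(-z), pKzz (c₂ / (4 * ε)) z y * W y))) := by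
      have h1 := (hasDerivAt_transform hWc (continuous_pKz (c₂ / (4 * ε)))
        (continuous_pKzz (c₂ / (4 * ε))) (hasDerivAt_pKz (c₂ / (4 * ε))) z).hasDerivWithinAt
        (s := strip)
      have hd : HasDerivAt (fun z => pKer ε c₂ z z) (-(2 * (c₂ / (4 * ε)))) z := by
        simp only [pKer_diag]
        simpa using (hasDerivAt_id z).const_mul (-(2 * (c₂ / (4 * ε))))
      have h2 := (hwzz z hz t ht).add ((hd.hasDerivWithinAt.mul (hwz z hz t ht)).add h1)
      refine (h2.congr (hEz t ht W hWc hW) (hEz t ht W hWc hW z hz)).derivWithin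
        (huniq z hz) |>.trans ?_
      rw [hW z hz, hW (-z) hzn]
    have hEt : deriv (fun s => ebar z s) t = wt z t +
        ((∫ y in (1 / 2 : ℝ)..z, pKer ε c₂ z y * wt y t)
        + ∫ y in (-(1 / 2 : ℝ))..(-z), pKer ε c₂ z y * wt y t) := by
      have h1 := (hwt z hz t ht).add
        ((hasDerivAt_integral_time ht (hpc z) (hsub _ hR _ hz) hwslice hwt hcwt).add
        (hasDerivAt_integral_time ht (hpc z) (hsub _ hL _ hzn) hwslice hwt hcwt))
      refine (h1.congr_of_eventuallyEq ?_).deriv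
      filter_upwards [Ioi_mem_nhds ht] with s hs
      exact hE z hz s hs
    have hcw2 : ContinuousOn (fun y => wzz y t) strip :=
      hcwzz.comp (f := fun y => (y, t)) (by fun_prop) fun y hy => ⟨hy, ht⟩
    have hpyy : Continuous fun y => pKyy (c₂ / (4 * ε)) z y :=
      (continuous_pKyy _).comp (.prodMk_right z)
    have hpzz : Continuous fun y => pKzz (c₂ / (4 * ε)) z y :=
      (continuous_pKzz _).comp (.prodMk_right z)
    have hgreen : ∀ α ∈ strip, ∀ β ∈ strip, α ≤ β →
        ∫ y in α..β, pKer ε c₂ z y * wzz y t =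
          (pKer ε c₂ z β * wz β t - pKy (c₂ / (4 * ε)) z β * wbar β t)
            - (pKer ε c₂ z α * wz α t - pKy (c₂ / (4 * ε)) z α * wbar α t)
            + ∫ y in α..β, pKyy (c₂ / (4 * ε)) z y * W y := fun α hα β hβ h =>
      green_identity h hα.1 hβ.2 hWc hW (fun y hy => hwz y hy t ht)
        (fun y hy => hwzz y hy t ht) hcw2 (hasDerivAt_pKer_y ε c₂ z)
        (hasDerivAt_pKy _ z) hpyy
    have hsplit : ∀ α ∈ strip, ∀ β ∈ strip, ∫ y in α..β, pKer ε c₂ z y * wt y t =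
        ε * (∫ y in α..β, pKer ε c₂ z y * wzz y t)
          - lam * ∫ y in α..β, pKer ε c₂ z y * wbar y t := by
      intro α hα β hβ
      have hi : IntervalIntegrable (fun y => pKer ε c₂ z y * wzz y t)
          MeasureTheory.volume α β :=
        ((hpc z).continuousOn.mul (hcw2.mono (hsub α hα β hβ))).intervalIntegrable
      rw [← intervalIntegral.integral_const_mul, ← intervalIntegral.integral_const_mul,
        ← intervalIntegral.integral_sub (hi.const_mul ε) ((hint z t ht α hα β hβ).const_mul lam)]
      refine intervalIntegral.integral_congr fun y hy => ?_
      simp only [hpde y (hsub α hα β hβ hy) t ht]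
      ring
    have hker : ∀ α ∈ strip, ∀ β ∈ strip,
        ε * (∫ y in α..β, pKyy (c₂ / (4 * ε)) z y * W y)
          - ε * (∫ y in α..β, pKzz (c₂ / (4 * ε)) z y * W y)
          = c₂ * ∫ y in α..β, pKer ε c₂ z y * wbar y t := by
      intro α hα β hβ
      have hi1 : IntervalIntegrable (fun y => pKyy (c₂ / (4 * ε)) z y * W y)
          MeasureTheory.volume α β := (hpyy.mul hWc).intervalIntegrable α β
      have hi2 : IntervalIntegrable (fun y => pKzz (c₂ / (4 * ε)) z y * W y)
          MeasureTheory.volume α β := (hpzz.mul hWc).intervalIntegrable α β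
      rw [hcongr t W hW _ α hα β hβ, ← intervalIntegral.integral_const_mul,
        ← intervalIntegral.integral_const_mul, ← intervalIntegral.integral_const_mul,
        ← intervalIntegral.integral_sub (hi1.const_mul ε) (hi2.const_mul ε)]
      refine intervalIntegral.integral_congr fun y _ => ?_
      have := pKer_pde hε.ne' c₂ z y
      linear_combination W y * this
    -- Integrating by parts twice leaves boundary terms: those at `±1/2` are the injection gains,
    -- those at `z` combine to `c₂ w` by the diagonal condition, and those at `-z` cancel.
    have hgR := hgreen z hz _ hR hz.2
    rw [intervalIntegral.integral_symm, intervalIntegral.integral_symm (1 / 2) z] at hgR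
    have hgL := hgreen _ hL (-z) hzn hzn.1
    rw [hbcR t ht] at hgR
    rw [hbcL t ht, pKer_antidiag, pKy_antidiag] at hgL
    have hkR := hker _ hR z hz
    have hkL := hker _ hL _ hzn
    have hdiag := pKy_add_pKz_diag (c₂ / (4 * ε)) z
    have hκ : c₂ = 4 * ε * (c₂ / (4 * ε)) := by field_simp
    rw [hEt, hEzz, hsplit _ hR z hz, hsplit _ hL _ hzn, hEL t ht, hER t ht, hE z hz t ht,
      hpbar₂, hpbar₁, (hasDerivAt_pKer_y ε c₂ z _).deriv, (hasDerivAt_pKer_y ε c₂ z _).deriv,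
      hpde z hz t ht]
    have hA : a ^ 2 * b ^ 2 / (4 * ε) = lam - c₂ := by rw [hlam]; ring
    rw [hA]
    generalize c₂ / (4 * ε) = κ at *
    linear_combination (-ε) * hgR + ε * hgL + hkR + hkL - ε * wbar z t * hdiag - wbar z t * hκ
  · obtain ⟨W, hWc, hW⟩ := hext t ht
    rw [hEz t ht W hWc hW _ hL, hEL t ht, hp₀₀, hbcL t ht, neg_neg,
      intervalIntegral.integral_symm (-(1 / 2))]
    ring
  · obtain ⟨W, hWc, hW⟩ := hext t ht
    rw [hEz t ht W hWc hW _ hR, hER t ht, hp₁₁, hbcR t ht]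
    simp

end
end
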